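/- arXiv:0710.0106 — 4 statements merged into one kernel-verified Lean document; each statement's English description precedes it below -/
import Mathlib

section
/- Let X be a real normed space, Y a real Banach space, and let 0 ≤ p < 2. Suppose f : X → Y satisfies ‖f(x+y) + f(x−y) − 2f(x) − 2f(y)‖ ≤ ‖x‖^p + ‖y‖^p for all x, y ∈ X. Then there exists a unique quadratic function Q : X → Y such that ‖Q(x) − f(x)‖ ≤ (4/(2^(2−p) − 1)) · ‖x‖^p for all x ∈ X. -/
/-! The direct (Hyers) method. Taking `y = x` in the hypothesis, and `x = y = 0` to control `f 0`,
gives `‖f (2x) - 4 f x‖ ≤ 3 ‖x‖ ^ p`. Hence the rescalings `4⁻ⁿ f (2ⁿ x)` move by at most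
`(3/4) ‖x‖ ^ p rⁿ` at step `n`, where `r = 2 ^ p / 4 < 1`. They converge to some `Q x`
with `‖Q x - f x‖ ≤ 3 / (4 - 2 ^ p) ‖x‖ ^ p`, which is stronger than the required bound
`4 / (2 ^ (2 - p) - 1) = 4 · 2 ^ p / (4 - 2 ^ p)`. The defect of the rescaled functions in the quadratic
equation is `O(rⁿ)`, so `Q` is quadratic. Conversely a quadratic map satisfies `Q (2ⁿ x) = 4ⁿ Q x`,
so any quadratic `R` with `‖R x - f x‖ = O(‖x‖ ^ p)` is within `O(rⁿ)` of `4⁻ⁿ f (2ⁿ x)` at `x`, and `R = Q`. -/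

open Filter Finset

/-- A fuzzy norm on a real vector space, following Bag–Samanta. -/
structure IsFuzzyNorm {X : Type*} [AddCommGroup X] [Module ℝ X] (N : X → ℝ → ℝ) : Prop where
  nonneg : ∀ (x : X) (t : ℝ), 0 ≤ N x t
  le_one : ∀ (x : X) (t : ℝ), N x t ≤ 1
  eq_zero_of_nonpos : ∀ (x : X) (c : ℝ), c ≤ 0 → N x c = 0
  eq_zero_iff : ∀ x : X, x = 0 ↔ ∀ c : ℝ, 0 < c → N x c = 1
  smul_eq : ∀ (c : ℝ) (x : X) (t : ℝ), c ≠ 0 → N (c • x) t = N x (t / |c|)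
  min_le_add : ∀ (x y : X) (s t : ℝ), min (N x s) (N y t) ≤ N (x + y) (s + t)
  mono : ∀ x : X, Monotone (N x)
  tendsto_one : ∀ x : X, Tendsto (N x) atTop (nhds 1)

/-- Convergence of a sequence to a fuzzy limit in a fuzzy normed space. -/
def FuzzyTendsto {X : Type*} [AddCommGroup X] [Module ℝ X] (N : X → ℝ → ℝ)
    (xs : ℕ → X) (x : X) : Prop :=
  ∀ t : ℝ, 0 < t → Tendsto (fun n => N (xs n - x) t) atTop (nhds 1)

/-- Cauchy sequences in a fuzzy normed space. -/
def FuzzyCauchy {X : Type*} [AddCommGroup X] [Module ℝ X] (N : X → ℝ → ℝ)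
    (xs : ℕ → X) : Prop :=
  ∀ ε : ℝ, 0 < ε → ∀ t : ℝ, 0 < t → ∃ n₀ : ℕ, ∀ n ≥ n₀, ∀ p : ℕ, 0 < p →
    1 - ε < N (xs (n + p) - xs n) t

/-- A fuzzy normed space is complete (a fuzzy Banach space) if every Cauchy
sequence converges. -/
def IsFuzzyComplete {X : Type*} [AddCommGroup X] [Module ℝ X] (N : X → ℝ → ℝ) : Prop :=
  ∀ xs : ℕ → X, FuzzyCauchy N xs → ∃ x : X, FuzzyTendsto N xs x

/-- Quadratic functional equation. -/
def IsQuadratic {X Y : Type*} [AddCommGroup X] [AddCommGroup Y] (Q : X → Y) : Prop :=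
  ∀ x y : X, Q (x + y) + Q (x - y) = 2 • Q x + 2 • Q y

/-- Additive functional equation. -/
def IsAdditive {X Y : Type*} [AddCommGroup X] [AddCommGroup Y] (T : X → Y) : Prop :=
  ∀ x y : X, T (x + y) = T x + T y

lemma norm_two_pow_smul_rpow {X : Type*} [NormedAddCommGroup X] [NormedSpace ℝ X]
    (p : ℝ) (n : ℕ) (x : X) :
    ‖(2 : ℝ) ^ n • x‖ ^ p = ((2 : ℝ) ^ p) ^ n * ‖x‖ ^ p := by
  rw [norm_smul, norm_pow, Real.norm_ofNat, Real.mul_rpow (by positivity) (norm_nonneg _),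
    ← Real.rpow_natCast, ← Real.rpow_natCast, ← Real.rpow_mul (by norm_num),
    ← Real.rpow_mul (by norm_num), mul_comm p]

lemma IsQuadratic.map_two_pow_smul {X Y : Type*} [AddCommGroup X] [Module ℝ X]
    [AddCommGroup Y] [Module ℝ Y] {Q : X → Y} (hQ : IsQuadratic Q) (n : ℕ) (x : X) :
    Q ((2 : ℝ) ^ n • x) = (4 : ℝ) ^ n • Q x := by
  have h0 : Q 0 = 0 := by
    have h := hQ 0 0
    rw [add_zero, sub_zero, ← two_nsmul, left_eq_add, ← ofNat_smul_eq_nsmul ℝ] at h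
    simpa using h
  have hdouble : ∀ z, Q ((2 : ℝ) • z) = (4 : ℝ) • Q z := by
    intro z
    have h := hQ z z
    rw [sub_self, h0, add_zero, ← two_smul ℝ z] at h
    rw [h]
    module
  induction n with
  | zero => simp
  | succ k ih => rw [pow_succ', mul_smul, hdouble, ih, smul_smul, ← pow_succ']

/-- The sharper constant `3 / (4 - 2 ^ p)`, in the form given by the geometric series, is below the
stated one, because `1 ≤ 2 ^ p`. -/
lemma geometric_const_le {p : ℝ} (hp0 : 0 ≤ p) (hp2 : p < 2) :
    3 / 4 / (1 - (2 : ℝ) ^ p / 4) ≤ 4 / ((2 : ℝ) ^ ((2 : ℝ) - p) - 1) := by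
  have h1 : (1 : ℝ) ≤ 2 ^ p := Real.one_le_rpow (by norm_num) hp0
  have h4 : (2 : ℝ) ^ p < 4 := by
    calc (2 : ℝ) ^ p < 2 ^ (2 : ℝ) := Real.rpow_lt_rpow_of_exponent_lt (by norm_num) hp2
      _ = 4 := by norm_num
  have he : (2 : ℝ) ^ ((2 : ℝ) - p) = 4 / 2 ^ p := by
    rw [Real.rpow_sub (by norm_num)]
    norm_num
  have hgt : 1 < 4 / (2 : ℝ) ^ p := by rwa [one_lt_div (by linarith)]
  rw [he, div_le_div_iff₀ (by linarith) (by linarith)]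
  -- with `t = 2 ^ p ∈ [1, 4)` this reads `(3 / 4) (4 - t) / t ≤ 4 - t`
  have key : 0 ≤ (4 - (2 : ℝ) ^ p) * (1 - 3 / 4 * (1 / 2 ^ p)) := by
    have : 1 / (2 : ℝ) ^ p ≤ 1 := by rw [div_le_one (by linarith)]; exact h1
    exact mul_nonneg (by linarith) (by linarith)
  have hinv : (2 : ℝ) ^ p * (1 / 2 ^ p) = 1 := mul_one_div_cancel (by linarith)
  have h4inv : 4 / (2 : ℝ) ^ p = 4 * (1 / 2 ^ p) := by ring
  rw [h4inv]
  nlinarith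

/-- Approximate homogeneity. The constant is `3` instead of `2` because `f 0` need not vanish when
`p = 0`, where `0 ^ 0 = 1` only gives `‖f 0‖ ≤ 1`. -/
lemma norm_map_two_smul_sub_le {X Y : Type*} [NormedAddCommGroup X] [NormedSpace ℝ X]
    [NormedAddCommGroup Y] [NormedSpace ℝ Y] {p : ℝ} {f : X → Y}
    (hf : ∀ x y : X, ‖f (x + y) + f (x - y) - 2 • f x - 2 • f y‖ ≤ ‖x‖ ^ p + ‖y‖ ^ p) (x : X) :
    ‖f ((2 : ℝ) • x) - (4 : ℝ) • f x‖ ≤ 3 * ‖x‖ ^ p := by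
  have h0 : ‖f 0‖ ≤ ‖x‖ ^ p := by
    have h := hf 0 0
    have e : f (0 + 0) + f (0 - 0) - 2 • f 0 - 2 • f 0 = (-2 : ℝ) • f 0 := by
      rw [add_zero, sub_zero]; module
    rw [e, norm_smul, norm_neg, Real.norm_ofNat, norm_zero] at h
    rcases eq_or_ne p 0 with rfl | hp
    · simp only [Real.rpow_zero] at h ⊢
      linarith
    · rw [Real.zero_rpow hp] at h
      have := Real.rpow_nonneg (norm_nonneg x) p
      linarith
  have h := hf x x
  have e : f ((2 : ℝ) • x) - (4 : ℝ) • f x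
      = (f (x + x) + f (x - x) - 2 • f x - 2 • f x) - f 0 := by
    rw [sub_self, two_smul]; module
  rw [e]
  linarith [norm_sub_le (f (x + x) + f (x - x) - 2 • f x - 2 • f x) (f 0)]

/-- Classical Hyers–Ulam–Rassias stability of the quadratic equation in normed
spaces (Theorem 2.4). -/
theorem classical_stability_quadratic
    {X Y : Type*} [NormedAddCommGroup X] [NormedSpace ℝ X]
    [NormedAddCommGroup Y] [NormedSpace ℝ Y] [CompleteSpace Y]
    (p : ℝ) (hp0 : 0 ≤ p) (hp2 : p < 2)
    (f : X → Y)
    (hf : ∀ x y : X, ‖f (x + y) + f (x - y) - 2 • f x - 2 • f y‖ ≤ ‖x‖ ^ p + ‖y‖ ^ p) :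
    ∃! Q : X → Y, IsQuadratic Q ∧
      ∀ x : X, ‖Q x - f x‖ ≤ (4 / ((2 : ℝ) ^ ((2 : ℝ) - p) - 1)) * ‖x‖ ^ p := by
  have hr0 : 0 ≤ (2 : ℝ) ^ p / 4 := by positivity
  have hr1 : (2 : ℝ) ^ p / 4 < 1 := by
    rw [div_lt_one (by norm_num)]
    calc (2 : ℝ) ^ p < 2 ^ (2 : ℝ) := Real.rpow_lt_rpow_of_exponent_lt (by norm_num) hp2
      _ = 4 := by norm_num
  have hrlim : ∀ c : ℝ, Tendsto (fun n : ℕ => ((2 : ℝ) ^ p / 4) ^ n * c) atTop (nhds 0) := by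
    intro c
    simpa using (tendsto_pow_atTop_nhds_zero_of_lt_one hr0 hr1).mul_const c
  have hscale : ∀ (n : ℕ) (v : Y), ‖((4 : ℝ) ^ n)⁻¹ • v‖ = ((4 : ℝ) ^ n)⁻¹ * ‖v‖ := by
    intro n v
    rw [norm_smul, norm_inv, norm_pow, Real.norm_ofNat]
  have hstep : ∀ (x : X) (n : ℕ),
      dist (((4 : ℝ) ^ n)⁻¹ • f ((2 : ℝ) ^ n • x))
        (((4 : ℝ) ^ (n + 1))⁻¹ • f ((2 : ℝ) ^ (n + 1) • x))
      ≤ 3 / 4 * ‖x‖ ^ p * ((2 : ℝ) ^ p / 4) ^ n := by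
    intro x n
    have h := norm_map_two_smul_sub_le hf ((2 : ℝ) ^ n • x)
    rw [norm_two_pow_smul_rpow, smul_smul, ← pow_succ'] at h
    have e : ((4 : ℝ) ^ (n + 1))⁻¹ • f ((2 : ℝ) ^ (n + 1) • x)
        - ((4 : ℝ) ^ n)⁻¹ • f ((2 : ℝ) ^ n • x)
        = ((4 : ℝ) ^ (n + 1))⁻¹ •
          (f ((2 : ℝ) ^ (n + 1) • x) - (4 : ℝ) • f ((2 : ℝ) ^ n • x)) := by
      rw [smul_sub, smul_smul]
      congr 3
      rw [pow_succ]; field_simp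
    rw [dist_comm, dist_eq_norm, e, hscale]
    calc ((4 : ℝ) ^ (n + 1))⁻¹ * ‖f ((2 : ℝ) ^ (n + 1) • x) - (4 : ℝ) • f ((2 : ℝ) ^ n • x)‖
        ≤ ((4 : ℝ) ^ (n + 1))⁻¹ * (3 * (((2 : ℝ) ^ p) ^ n * ‖x‖ ^ p)) := by gcongr
      _ = 3 / 4 * ‖x‖ ^ p * ((2 : ℝ) ^ p / 4) ^ n := by
        rw [div_pow, pow_succ]; field_simp
  have hlim : ∀ x : X, ∃ L : Y,
      Tendsto (fun n : ℕ => ((4 : ℝ) ^ n)⁻¹ • f ((2 : ℝ) ^ n • x)) atTop (nhds L) := fun x =>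
    cauchySeq_tendsto_of_complete (cauchySeq_of_le_geometric _ _ hr1 (hstep x))
  choose Q hQ using hlim
  refine ⟨Q, ⟨?_, ?_⟩, ?_⟩
  · intro x y
    have ht := (((hQ (x + y)).add (hQ (x - y))).sub ((hQ x).const_smul 2)).sub
      ((hQ y).const_smul 2)
    have hz : Q (x + y) + Q (x - y) - 2 • Q x - 2 • Q y = 0 := by
      refine tendsto_nhds_unique ht
        (squeeze_zero_norm (fun n => ?_) (hrlim (‖x‖ ^ p + ‖y‖ ^ p)))
      have h := hf ((2 : ℝ) ^ n • x) ((2 : ℝ) ^ n • y)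
      rw [← smul_add, ← smul_sub, norm_two_pow_smul_rpow, norm_two_pow_smul_rpow] at h
      have e : ((4 : ℝ) ^ n)⁻¹ • f ((2 : ℝ) ^ n • (x + y))
          + ((4 : ℝ) ^ n)⁻¹ • f ((2 : ℝ) ^ n • (x - y))
          - 2 • ((4 : ℝ) ^ n)⁻¹ • f ((2 : ℝ) ^ n • x)
          - 2 • ((4 : ℝ) ^ n)⁻¹ • f ((2 : ℝ) ^ n • y)
          = ((4 : ℝ) ^ n)⁻¹ • (f ((2 : ℝ) ^ n • (x + y)) + f ((2 : ℝ) ^ n • (x - y))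
            - 2 • f ((2 : ℝ) ^ n • x) - 2 • f ((2 : ℝ) ^ n • y)) := by module
      rw [e, hscale]
      refine (mul_le_mul_of_nonneg_left h (by positivity)).trans_eq ?_
      rw [div_pow]; field_simp
    rw [sub_sub, sub_eq_zero] at hz
    exact hz
  · intro x
    have h := dist_le_of_le_geometric_of_tendsto₀ _ _ hr1 (hstep x) (hQ x)
    rw [pow_zero, pow_zero, inv_one, one_smul, one_smul, dist_comm, dist_eq_norm] at h
    calc ‖Q x - f x‖ ≤ 3 / 4 * ‖x‖ ^ p / (1 - (2 : ℝ) ^ p / 4) := h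
      _ = 3 / 4 / (1 - (2 : ℝ) ^ p / 4) * ‖x‖ ^ p := by ring
      _ ≤ _ := by
        gcongr ?_ * _
        exact geometric_const_le hp0 hp2
  · rintro R ⟨hR, hRf⟩
    funext x
    -- any admissible `R` satisfies `‖4⁻ⁿ f (2ⁿ x) - R x‖ = O(rⁿ)`, so it has to be the same limit
    refine tendsto_nhds_unique ?_ (hQ x)
    rw [tendsto_iff_norm_sub_tendsto_zero]
    refine squeeze_zero (fun _ => norm_nonneg _) (fun n => ?_)
      (hrlim ((4 / ((2 : ℝ) ^ ((2 : ℝ) - p) - 1)) * ‖x‖ ^ p))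
    have h := hRf ((2 : ℝ) ^ n • x)
    rw [hR.map_two_pow_smul, norm_two_pow_smul_rpow] at h
    have e : ((4 : ℝ) ^ n)⁻¹ • f ((2 : ℝ) ^ n • x) - R x
        = ((4 : ℝ) ^ n)⁻¹ • (f ((2 : ℝ) ^ n • x) - (4 : ℝ) ^ n • R x) := by
      rw [smul_sub, inv_smul_smul₀ (by positivity)]
    rw [e, hscale, norm_sub_rev]
    refine (mul_le_mul_of_nonneg_left h (by positivity)).trans_eq ?_
    rw [div_pow]; ring
end

section
/- Let X be a real linear space, (Y, N) a fuzzy Banach space, (Z, N′) a fuzzy normed space, and φ : X × X → Z with φ(2x, 2y) = α · φ(x, y) for all x, y ∈ X, where 0 < |α| < 4. Suppose f, g, h : X → Y are even functions with f(0) = g(0) = h(0) = 0 such that N (f(x+y) + f(x−y) − 2g(x) − 2h(y)) t ≥ N′ (φ(x, y)) t for all x, y ∈ X and all t ∈ ℝ. Then there exists a unique quadratic mapping Q : X → Y such that N (Q(x) − f(x)) t ≥ N″ x (((4 − |α|)/16) · t), N (Q(x) − g(x)) t ≥ N″ x (((12 − 3|α|)/(52 − |α|)) · t), and N (Q(x)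 − h(x)) t ≥ N″ x (((12 − 3|α|)/(52 − |α|)) · t) for all x ∈ X and all t > 0. -/
/-!
The direct (Hyers) method. Putting `y = 0`, `x = 0` and `y = x` in the inequality compares `g` and
`h` with `f`, and shows that `f (2x) - 4 f x` is controlled by `Ndd N' φ x`. As
`φ (2x, 2y) = α φ (x, y)` with `|α| < 4`, consecutive terms of `4⁻ⁿ f (2ⁿ x)` differ by a geometric
progression of ratio `|α| / 4`, so the sequence is Cauchy and its fuzzy limit `Q x` stays close to
`f x` (`exists_limit_of_geometric`). The defect of the quadratic equation for `4⁻ⁿ f (2ⁿ ·)` tends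
to `0`, hence `Q` is quadratic; two quadratic maps close to `f` agree since both satisfy
`Q (2ⁿ x) = 4ⁿ Q x`. The fuzzy norm need not be continuous in `t`, so the sharp
constant `4 - |α|` for `f` is not claimed: the limit argument yields `(4 - |α|) / 4`, more than the
theorem requires.
-/

open Filter Finset

/-- The control function `N″ x t = min {N′(φ(x,x))(t/3), N′(φ(x,0))(t/3), N′(φ(0,x))(t/3)}`. -/
noncomputable def Ndd {X Z : Type*} [Zero X] (N' : Z → ℝ → ℝ) (φ : X × X → Z) (x : X) (t : ℝ) : ℝ :=
  min (min (N' (φ (x, x)) (t / 3)) (N' (φ (x, 0)) (t / 3))) (N' (φ (0, x)) (t / 3))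

section FuzzyNorm

variable {Y : Type*} [AddCommGroup Y] [Module ℝ Y] {N : Y → ℝ → ℝ}

lemma fuzzy_zero (hN : IsFuzzyNorm N) {t : ℝ} (ht : 0 < t) : N 0 t = 1 :=
  (hN.eq_zero_iff 0).1 rfl t ht

lemma fuzzy_neg (hN : IsFuzzyNorm N) (x : Y) (t : ℝ) : N (-x) t = N x t := by
  have := hN.smul_eq (-1) x t (by norm_num)
  simpa using this

lemma fuzzy_sub_comm (hN : IsFuzzyNorm N) (x y : Y) (t : ℝ) : N (x - y) t = N (y - x) t := by
  rw [← fuzzy_neg hN, neg_sub]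

lemma fuzzy_add (hN : IsFuzzyNorm N) {x y z : Y} {a s t u : ℝ} (hx : a ≤ N x s) (hy : a ≤ N y t)
    (hz : z = x + y) (hu : s + t ≤ u) : a ≤ N z u := by
  subst hz
  exact (le_min hx hy).trans ((hN.min_le_add x y s t).trans (hN.mono _ hu))

/-- A squeeze principle: it suffices to bound `N (xs n - x) t` from below by quantities
tending to `1`. -/
lemma fuzzyTendsto_of_le (hN : IsFuzzyNorm N) {xs : ℕ → Y} {x : Y}
    (H : ∀ t : ℝ, 0 < t → ∃ b : ℕ → ℝ, Tendsto b atTop (nhds 1) ∧ ∀ n, b n ≤ N (xs n - x) t) :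
    FuzzyTendsto N xs x := by
  intro t ht
  obtain ⟨b, hb, hle⟩ := H t ht
  exact tendsto_of_tendsto_of_tendsto_of_le_of_le hb tendsto_const_nhds hle
    (fun n => hN.le_one _ _)

lemma FuzzyTendsto.add (hN : IsFuzzyNorm N) {xs ys : ℕ → Y} {x y : Y}
    (hx : FuzzyTendsto N xs x) (hy : FuzzyTendsto N ys y) :
    FuzzyTendsto N (fun n => xs n + ys n) (x + y) := by
  refine fuzzyTendsto_of_le hN fun t ht => ⟨_, ?_, fun n =>
    fuzzy_add hN (min_le_left (N (xs n - x) (t / 2)) (N (ys n - y) (t / 2))) (min_le_right _ _)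
      (by abel) (by linarith)⟩
  simpa using (hx (t / 2) (by linarith)).min (hy (t / 2) (by linarith))

lemma FuzzyTendsto.neg (hN : IsFuzzyNorm N) {xs : ℕ → Y} {x : Y} (hx : FuzzyTendsto N xs x) :
    FuzzyTendsto N (fun n => -xs n) (-x) := by
  intro t ht
  refine (hx t ht).congr fun n => ?_
  rw [neg_sub_neg, fuzzy_sub_comm hN]

lemma FuzzyTendsto.unique (hN : IsFuzzyNorm N) {xs : ℕ → Y} {x y : Y}
    (hx : FuzzyTendsto N xs x) (hy : FuzzyTendsto N xs y) : x = y := by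
  rw [← sub_eq_zero, hN.eq_zero_iff]
  intro c hc
  refine le_antisymm (hN.le_one _ _) ?_
  have h := (hx (c / 2) (by linarith)).min (hy (c / 2) (by linarith))
  rw [min_self] at h
  refine le_of_tendsto' h fun n => ?_
  refine fuzzy_add hN (x := x - xs n) (y := xs n - y) (s := c / 2) (t := c / 2) ?_
    (min_le_right _ _) (by abel) (by linarith)
  rw [fuzzy_sub_comm hN]
  exact min_le_left _ _

/-- The fuzzy counterpart of summing a geometric series. The factor `2 - r ^ p` replaces the exact
partial sum `1 - r ^ p`, so that the case `p = 0` is not evaluated at `t = 0`, where `N` vanishes. -/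
lemma le_of_geometric (hN : IsFuzzyNorm N) {a : ℕ → Y} {D : ℝ → ℝ} {r : ℝ}
    (hD1 : ∀ v, D v ≤ 1) (hr0 : 0 < r)
    (hstep : ∀ n v, 0 < v → D v ≤ N (a (n + 1) - a n) (r ^ n * (1 - r) * v))
    (n p : ℕ) {v : ℝ} (hv : 0 < v) :
    D v ≤ N (a (n + p) - a n) (r ^ n * v * (2 - r ^ p)) := by
  induction p with
  | zero =>
    rw [add_zero, sub_self, fuzzy_zero hN (by norm_num; positivity)]
    exact hD1 v
  | succ p ih =>
    refine fuzzy_add hN (hstep (n + p) v hv) ih ?_ (le_of_eq ?_)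
    · rw [← add_assoc]; abel
    · ring

lemma exists_limit_of_geometric (hN : IsFuzzyNorm N) (hc : IsFuzzyComplete N) {a : ℕ → Y}
    {D : ℝ → ℝ} {r : ℝ} (hD1 : ∀ v, D v ≤ 1) (hD : Tendsto D atTop (nhds 1))
    (hr0 : 0 < r) (hr1 : r < 1)
    (hstep : ∀ n v, 0 < v → D v ≤ N (a (n + 1) - a n) (r ^ n * (1 - r) * v)) :
    ∃ L, FuzzyTendsto N a L ∧ ∀ v, 0 < v → D v ≤ N (L - a 0) (4 * v) := by
  have key : ∀ n p v, 0 < v → D v ≤ N (a (n + p) - a n) (r ^ n * v * 2) := fun n p v hv =>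
    (le_of_geometric hN hD1 hr0 hstep n p hv).trans (hN.mono _ (by
      have : 0 < r ^ n * v := by positivity
      have : 0 < r ^ p := by positivity
      gcongr
      linarith))
  have hcau : FuzzyCauchy N a := by
    intro ε hε t ht
    obtain ⟨v, hv, hv0⟩ :=
      ((hD.eventually (lt_mem_nhds (by linarith : 1 - ε < 1))).and (eventually_gt_atTop 0)).exists
    have hlim : Tendsto (fun n : ℕ => r ^ n * v * 2) atTop (nhds 0) := by
      simpa using ((tendsto_pow_atTop_nhds_zero_of_lt_one hr0.le hr1).mul_const v).mul_const 2
    obtain ⟨n₀, hn₀⟩ := eventually_atTop.1 (hlim.eventually (gt_mem_nhds ht))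
    exact ⟨n₀, fun n hn p _ => hv.trans_le ((key n p v hv0).trans (hN.mono _ (hn₀ n hn).le))⟩
  obtain ⟨L, hL⟩ := hc a hcau
  refine ⟨L, hL, fun v hv => ?_⟩
  have hm : Tendsto (fun p => min (N (a p - L) (2 * v)) (D v)) atTop (nhds (D v)) := by
    simpa [min_eq_right (hD1 v)] using (hL (2 * v) (by linarith)).min (tendsto_const_nhds (x := D v))
  refine le_of_tendsto' hm fun p => ?_
  refine fuzzy_add hN (x := L - a p) (y := a p - a 0) (s := 2 * v) (t := 2 * v) ?_ ?_
    (by abel) (by linarith)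
  · rw [fuzzy_sub_comm hN]
    exact min_le_left _ _
  · refine (min_le_right _ _).trans ?_
    have := key 0 p v hv
    rwa [zero_add, pow_zero, one_mul, mul_comm] at this

end FuzzyNorm

lemma IsQuadratic.map_two_pow {X Y : Type*} [AddCommGroup X] [AddCommGroup Y] [Module ℝ Y]
    {Q : X → Y} (hQ : IsQuadratic Q) (n : ℕ) (x : X) : Q (2 ^ n • x) = (4 : ℝ) ^ n • Q x := by
  have h0 : Q 0 = 0 := by
    have h := hQ 0 0
    simp only [add_zero, sub_zero] at h
    have h2 : (2 : ℝ) • Q 0 = 0 := by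
      rw [two_smul]
      rw [two_smul] at h
      simpa using h
    simpa using h2
  have h2 : ∀ y, Q (2 • y) = (4 : ℝ) • Q y := fun y => by
    have h := hQ y y
    rw [sub_self, h0, add_zero, ← two_nsmul] at h
    rw [h]
    module
  induction n with
  | zero => simp
  | succ n ih => rw [pow_succ', mul_smul, h2, ih, smul_smul, pow_succ']

section Control

variable {X Z : Type*} [AddCommGroup X] [AddCommGroup Z] [Module ℝ Z] {N' : Z → ℝ → ℝ}
  {φ : X × X → Z} {α : ℝ}

lemma control_two_pow (hN' : IsFuzzyNorm N') (hα0 : 0 < |α|)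
    (hφ : ∀ x y : X, φ (2 • x, 2 • y) = α • φ (x, y)) (n : ℕ) (x y : X) (t : ℝ) :
    N' (φ (2 ^ n • x, 2 ^ n • y)) t = N' (φ (x, y)) (t / |α| ^ n) := by
  have h : φ (2 ^ n • x, 2 ^ n • y) = α ^ n • φ (x, y) := by
    induction n with
    | zero => simp
    | succ n ih => rw [pow_succ', mul_smul, mul_smul, hφ, ih, smul_smul, pow_succ']
  rw [h, hN'.smul_eq _ _ _ (pow_ne_zero _ (abs_pos.1 hα0)), abs_pow]

lemma Ndd_two_pow (hN' : IsFuzzyNorm N') (hα0 : 0 < |α|)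
    (hφ : ∀ x y : X, φ (2 • x, 2 • y) = α • φ (x, y)) (n : ℕ) (x : X) (t : ℝ) :
    Ndd N' φ (2 ^ n • x) t = Ndd N' φ x (t / |α| ^ n) := by
  have h1 := control_two_pow hN' hα0 hφ n x x (t / 3)
  have h2 := control_two_pow hN' hα0 hφ n x 0 (t / 3)
  have h3 := control_two_pow hN' hα0 hφ n 0 x (t / 3)
  rw [smul_zero] at h2 h3
  rw [Ndd, Ndd, h1, h2, h3, div_right_comm]

lemma Ndd_le_one (hN' : IsFuzzyNorm N') (x : X) (t : ℝ) : Ndd N' φ x t ≤ 1 :=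
  (min_le_right _ _).trans (hN'.le_one _ _)

lemma Ndd_mono (hN' : IsFuzzyNorm N') (x : X) : Monotone (Ndd N' φ x) := by
  intro s t hst
  have h : s / 3 ≤ t / 3 := by linarith
  exact min_le_min (min_le_min (hN'.mono _ h) (hN'.mono _ h)) (hN'.mono _ h)

lemma Ndd_tendsto (hN' : IsFuzzyNorm N') (x : X) :
    Tendsto (Ndd N' φ x) atTop (nhds 1) := by
  have h3 : Tendsto (fun t : ℝ => t / 3) atTop atTop := tendsto_id.atTop_div_const (by norm_num)
  have h := ((((hN'.tendsto_one (φ (x, x))).comp h3).min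
    ((hN'.tendsto_one (φ (x, 0))).comp h3)).min ((hN'.tendsto_one (φ (0, x))).comp h3))
  rw [min_self, min_self] at h
  exact h

end Control

/-- Rescaling by `4ⁿ` beats the growth `|α|ⁿ` of the control function, so controls evaluated along
this sequence tend to `1`. -/
lemma tendsto_scale {α c : ℝ} (hα0 : 0 < |α|) (hα4 : |α| < 4) (hc : 0 < c) :
    Tendsto (fun n : ℕ => 4 ^ n * c / |α| ^ n) atTop atTop := by
  have h : Tendsto (fun n : ℕ => (4 / |α|) ^ n * c) atTop atTop :=
    (tendsto_pow_atTop_atTop_of_one_lt ((one_lt_div hα0).2 hα4)).atTop_mul_const hc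
  refine h.congr fun n => ?_
  rw [div_pow]
  ring

/-- Uniqueness in the stability problem, for any positive constant `c`. -/
lemma quadratic_unique {X Y Z : Type*} [AddCommGroup X] [AddCommGroup Y] [Module ℝ Y]
    [AddCommGroup Z] [Module ℝ Z] {N : Y → ℝ → ℝ} {N' : Z → ℝ → ℝ} (hN : IsFuzzyNorm N)
    (hN' : IsFuzzyNorm N') {α c : ℝ} (hα0 : 0 < |α|) (hα4 : |α| < 4) (hc : 0 < c)
    {φ : X × X → Z} (hφ : ∀ x y : X, φ (2 • x, 2 • y) = α • φ (x, y)) {f P Q : X → Y}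
    (hP : IsQuadratic P) (hQ : IsQuadratic Q)
    (hPf : ∀ x t, 0 < t → Ndd N' φ x (c * t) ≤ N (P x - f x) t)
    (hQf : ∀ x t, 0 < t → Ndd N' φ x (c * t) ≤ N (Q x - f x) t) : P = Q := by
  funext x
  rw [← sub_eq_zero, hN.eq_zero_iff]
  intro t ht
  refine le_antisymm (hN.le_one _ _) ?_
  have hlim := (Ndd_tendsto (φ := φ) hN' x).comp
    (tendsto_scale hα0 hα4 (show 0 < c * (t / 2) by positivity))
  refine le_of_tendsto' hlim fun n => ?_
  have h4 : (0 : ℝ) < 4 ^ n := by positivity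
  have hs : N (P x - Q x) t = N (P (2 ^ n • x) - Q (2 ^ n • x)) (4 ^ n * t) := by
    rw [hP.map_two_pow, hQ.map_two_pow, ← smul_sub, hN.smul_eq _ _ _ h4.ne', abs_of_pos h4,
      mul_div_cancel_left₀ _ h4.ne']
  have hle : (Ndd N' φ x ∘ fun n : ℕ => 4 ^ n * (c * (t / 2)) / |α| ^ n) n
      = Ndd N' φ (2 ^ n • x) (c * (4 ^ n * (t / 2))) := by
    rw [Ndd_two_pow hN' hα0 hφ, Function.comp_apply]
    congr 2
    ring
  rw [hs, hle]
  have hQ' := hQf (2 ^ n • x) (4 ^ n * (t / 2)) (by positivity)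
  rw [fuzzy_sub_comm hN] at hQ'
  exact fuzzy_add hN (hPf (2 ^ n • x) (4 ^ n * (t / 2)) (by positivity)) hQ' (by abel)
    (by linarith)

/-- Proposition 3.2: fuzzy stability of the Pexiderized quadratic equation for
even functions vanishing at `0`; one obtains a unique quadratic mapping `Q`. -/
theorem fuzzy_stability_pexider_even
    {X Y Z : Type*} [AddCommGroup X] [Module ℝ X]
    [AddCommGroup Y] [Module ℝ Y] [AddCommGroup Z] [Module ℝ Z]
    (N : Y → ℝ → ℝ) (N' : Z → ℝ → ℝ)
    (hN : IsFuzzyNorm N) (hYcomplete : IsFuzzyComplete N) (hN' : IsFuzzyNorm N')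
    (α : ℝ) (hα0 : 0 < |α|) (hα4 : |α| < 4)
    (φ : X × X → Z)
    (hφ : ∀ x y : X, φ (2 • x, 2 • y) = α • φ (x, y))
    (f g h : X → Y)
    (hfeven : ∀ x : X, f (-x) = f x)
    (hgeven : ∀ x : X, g (-x) = g x)
    (hheven : ∀ x : X, h (-x) = h x)
    (hf0 : f 0 = 0) (hg0 : g 0 = 0) (hh0 : h 0 = 0)
    (hineq : ∀ x y : X, ∀ t : ℝ,
      N' (φ (x, y)) t ≤ N (f (x + y) + f (x - y) - 2 • g x - 2 • h y) t) :
    ∃! Q : X → Y, IsQuadratic Q ∧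
      (∀ x : X, ∀ t : ℝ, 0 < t →
        Ndd N' φ x ((4 - |α|) / 16 * t) ≤ N (Q x - f x) t) ∧
      (∀ x : X, ∀ t : ℝ, 0 < t →
        Ndd N' φ x ((12 - 3 * |α|) / (52 - |α|) * t) ≤ N (Q x - g x) t) ∧
      (∀ x : X, ∀ t : ℝ, 0 < t →
        Ndd N' φ x ((12 - 3 * |α|) / (52 - |α|) * t) ≤ N (Q x - h x) t) := by
  have h3 : 0 < 4 - |α| := by linarith
  have hfg : ∀ x t, N' (φ (x, 0)) t ≤ N (2 • f x - 2 • g x) t := fun x t => by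
    have h := hineq x 0 t
    rwa [add_zero, sub_zero, hh0, smul_zero, sub_zero, ← two_nsmul] at h
  have hfh : ∀ x t, N' (φ (0, x)) t ≤ N (2 • f x - 2 • h x) t := fun x t => by
    have h := hineq 0 x t
    rwa [zero_add, zero_sub, hg0, smul_zero, sub_zero, hfeven, ← two_nsmul] at h
  have hhalf : ∀ (y z : Y) (t : ℝ), N (2 • y - 2 • z) t = N (y - z) (t / 2) := fun y z t => by
    have h := hN.smul_eq 2 (y - z) t (by norm_num)
    rw [abs_of_pos (by norm_num : (0 : ℝ) < 2)] at h
    rw [← h]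
    congr 1
    module
  have hfq : ∀ x y t, min (min (N' (φ (x, y)) (t / 3)) (N' (φ (x, 0)) (t / 3)))
      (N' (φ (0, y)) (t / 3)) ≤ N (f (x + y) + f (x - y) + -(f x + f x) + -(f y + f y)) t := by
    intro x y t
    have h1 := hineq x y (t / 3)
    have h2 := hfg x (t / 3)
    have h3 := hfh y (t / 3)
    rw [fuzzy_sub_comm hN] at h2 h3
    refine fuzzy_add hN (fuzzy_add hN (((min_le_left _ _).trans (min_le_left _ _)).trans h1)
      (((min_le_left _ _).trans (min_le_right _ _)).trans h2) rfl le_rfl)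
      ((min_le_right _ _).trans h3) ?_ (by linarith)
    simp only [two_nsmul]
    abel
  have hdouble : ∀ x t, Ndd N' φ x t ≤ N (f (2 • x) - (4 : ℝ) • f x) t := by
    intro x t
    have h := hfq x x t
    rw [sub_self, hf0, ← two_nsmul x] at h
    have e : f (2 • x) - (4 : ℝ) • f x = f (2 • x) + 0 + -(f x + f x) + -(f x + f x) := by module
    rw [e]
    exact h
  have hscale : ∀ (n : ℕ) (y : Y) (t : ℝ), N (((4 : ℝ) ^ n)⁻¹ • y) t = N y (4 ^ n * t) := by
    intro n y t
    have h4 : (0 : ℝ) < 4 ^ n := by positivity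
    rw [hN.smul_eq _ _ _ (inv_ne_zero h4.ne'), abs_of_pos (inv_pos.2 h4), div_inv_eq_mul, mul_comm]
  have hlim : ∀ x, ∃ L, FuzzyTendsto N (fun n => ((4 : ℝ) ^ n)⁻¹ • f (2 ^ n • x)) L ∧
      ∀ v, 0 < v → Ndd N' φ x ((4 - |α|) * v) ≤ N (L - f x) (4 * v) := by
    intro x
    have h := exists_limit_of_geometric hN hYcomplete
      (a := fun n => ((4 : ℝ) ^ n)⁻¹ • f (2 ^ n • x)) (D := fun v => Ndd N' φ x ((4 - |α|) * v))
      (r := |α| / 4) (fun v => Ndd_le_one hN' _ _)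
      ((Ndd_tendsto hN' x).comp (tendsto_id.const_mul_atTop h3)) (by positivity) (by linarith) ?_
    · simpa using h
    intro n v hv
    have he : ((4 : ℝ) ^ (n + 1))⁻¹ • f (2 ^ (n + 1) • x) - ((4 : ℝ) ^ n)⁻¹ • f (2 ^ n • x)
        = ((4 : ℝ) ^ (n + 1))⁻¹ • (f (2 • 2 ^ n • x) - (4 : ℝ) • f (2 ^ n • x)) := by
      rw [smul_sub, smul_smul _ (4 : ℝ), pow_succ' 2, mul_smul]
      congr 2
      rw [pow_succ]
      field_simp
    rw [he, hscale]
    refine le_trans (le_of_eq ?_) (hdouble _ _)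
    rw [Ndd_two_pow hN' hα0 hφ]
    congr 1
    rw [div_pow, pow_succ]
    field_simp
  choose Q hQlim hQ using hlim
  have hQf : ∀ x t, 0 < t → Ndd N' φ x ((4 - |α|) / 4 * t) ≤ N (Q x - f x) t := fun x t ht => by
    have h := hQ x (t / 4) (by linarith)
    convert h using 2 <;> ring
  have hQquad : IsQuadratic Q := by
    intro x y
    have hL := (((hQlim (x + y)).add hN (hQlim (x - y))).add hN
      (((hQlim x).add hN (hQlim x)).neg hN)).add hN (((hQlim y).add hN (hQlim y)).neg hN)
    have h0 : FuzzyTendsto N _ 0 := fuzzyTendsto_of_le hN (xs := fun n =>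
        ((4 : ℝ) ^ n)⁻¹ • f (2 ^ n • (x + y)) + ((4 : ℝ) ^ n)⁻¹ • f (2 ^ n • (x - y)) +
        -(((4 : ℝ) ^ n)⁻¹ • f (2 ^ n • x) + ((4 : ℝ) ^ n)⁻¹ • f (2 ^ n • x)) +
        -(((4 : ℝ) ^ n)⁻¹ • f (2 ^ n • y) + ((4 : ℝ) ^ n)⁻¹ • f (2 ^ n • y))) (x := 0)
      fun t ht => by
        have hs := tendsto_scale hα0 hα4 (show 0 < t / 3 by linarith)
        have hm := (((hN'.tendsto_one (φ (x, y))).comp hs).min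
          ((hN'.tendsto_one (φ (x, 0))).comp hs)).min ((hN'.tendsto_one (φ (0, y))).comp hs)
        rw [min_self, min_self] at hm
        refine ⟨_, hm, fun n => ?_⟩
        have h := hfq (2 ^ n • x) (2 ^ n • y) (4 ^ n * t)
        have h2 := control_two_pow hN' hα0 hφ n x 0 (4 ^ n * t / 3)
        have h3 := control_two_pow hN' hα0 hφ n 0 y (4 ^ n * t / 3)
        rw [smul_zero] at h2 h3
        rw [control_two_pow hN' hα0 hφ, h2, h3, ← hscale, mul_div_assoc, ← smul_add,
          ← smul_sub] at h
        refine h.trans (le_of_eq ?_)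
        congr 1
        module
    have h := hL.unique hN h0
    rw [← sub_eq_zero, ← h, two_nsmul, two_nsmul]
    abel
  -- Both `g` and `h` lie within `u / 6` of `f` at control level `u`; with
  -- `u = (12 - 3|α|) / (52 - |α|) * t` the distances to `Q` add up to less than `t / 3`.
  have hpex : ∀ (k : X → Y), (∀ x t, Ndd N' φ x t ≤ N (2 • f x - 2 • k x) (t / 3)) →
      ∀ x t, 0 < t → Ndd N' φ x ((12 - 3 * |α|) / (52 - |α|) * t) ≤ N (Q x - k x) t := by
    intro k hk x t ht
    have h52 : 0 < 52 - |α| := by linarith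
    have h1 := hQf x (12 / (52 - |α|) * t) (by positivity)
    have e : (4 - |α|) / 4 * (12 / (52 - |α|) * t) = (12 - 3 * |α|) / (52 - |α|) * t := by
      field_simp
      ring
    rw [e] at h1
    have h2 := hk x ((12 - 3 * |α|) / (52 - |α|) * t)
    rw [hhalf] at h2
    refine fuzzy_add hN h1 h2 (by abel) ?_
    have e1 : 12 / (52 - |α|) ≤ 1 / 2 := by
      rw [div_le_div_iff₀ h52 (by norm_num)]; linarith
    have e2 : (12 - 3 * |α|) / (52 - |α|) ≤ 1 := by
      rw [div_le_one h52]; linarith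
    nlinarith
  have hc : 0 < (4 - |α|) / 16 := by positivity
  have hQ16 : ∀ x t, 0 < t → Ndd N' φ x ((4 - |α|) / 16 * t) ≤ N (Q x - f x) t :=
    fun x t ht => (Ndd_mono hN' x (by gcongr; norm_num)).trans (hQf x t ht)
  refine ⟨Q, ⟨hQquad, hQ16, hpex g fun x t => ?_, hpex h fun x t => ?_⟩, ?_⟩
  · exact ((min_le_left _ _).trans (min_le_right _ _)).trans (hfg x _)
  · exact (min_le_right _ _).trans (hfh x _)
  · rintro P ⟨hP, hPf, -, -⟩
    exact quadratic_unique hN hN' hα0 hα4 hc hφ hP hQquad hPf hQ16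
end

section
/- Let q > 0, p = 1/q, and let f be a function from a fuzzy normed space (X, N) to a fuzzy normed space (Y, N′) satisfying N′ (f(x+y) + f(x−y) − 2f(x) − 2f(y)) (t + s) ≥ min (N x (t^q)) (N y (s^q)) for all x, y ∈ X and s, t ∈ [0, ∞). Then for all integers n > m ≥ 0, all x ∈ X and all t > 0, N′ (f(2^n x)/4^n − f(2^m x)/4^m) (Σ_{k=m+1}^{n} t^p · 2^(k(p−2)+1)) ≥ N x t. -/
/-!
Taking `x = y = 0` in the hypothesis forces `f 0 = 0`. Taking `x = y` then bounds
`f (2x) - 4 f x` at level `2s` from below by `N x (s ^ q)`. Applying this at `2 ^ k • x` with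
`s = (2 ^ k t) ^ p` and dividing by `4 ^ (k + 1)` controls one step of the sequence
`f (2 ^ k x) / 4 ^ k` (`fuzzy_quadratic_step`); the level obtained is `2 ^ p` times smaller than the
`(k + 1)`-st summand, so monotonicity applies. The steps are summed with the fuzzy triangle
inequality, where the minimum loses nothing because every step has the same lower bound `N x t`.
-/

open Filter Finset

lemma fuzzy_quadratic_map_zero
    {X Y : Type*} [AddCommGroup X] [Module ℝ X] [AddCommGroup Y] [Module ℝ Y]
    {N : X → ℝ → ℝ} {N' : Y → ℝ → ℝ}
    (hN : IsFuzzyNorm N) (hN' : IsFuzzyNorm N') {q : ℝ} {f : X → Y}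
    (hf : ∀ x y : X, ∀ s t : ℝ, 0 ≤ s → 0 ≤ t →
      min (N x (t ^ q)) (N y (s ^ q)) ≤
        N' (f (x + y) + f (x - y) - 2 • f x - 2 • f y) (t + s)) :
    f 0 = 0 := by
  have h : (-2 : ℝ) • f 0 = 0 := by
    refine (hN'.eq_zero_iff _).2 fun c hc => le_antisymm (hN'.le_one _ _) ?_
    have h1 := hf 0 0 (c / 2) (c / 2) (by positivity) (by positivity)
    rw [(hN.eq_zero_iff 0).1 rfl _ (by positivity), min_self, add_halves] at h1
    have h2 : f 0 + f 0 - 2 • f 0 - 2 • f 0 = (-2 : ℝ) • f 0 := by module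
    rwa [add_zero, sub_zero, h2] at h1
  simpa using h

/-- The estimate for two consecutive terms of `f (2 ^ k x) / 4 ^ k`. -/
lemma fuzzy_quadratic_step
    {X Y : Type*} [AddCommGroup X] [Module ℝ X] [AddCommGroup Y] [Module ℝ Y]
    {N : X → ℝ → ℝ} {N' : Y → ℝ → ℝ}
    (hN : IsFuzzyNorm N) (hN' : IsFuzzyNorm N') {q p : ℝ} (hq : 0 < q) (hp : p = 1 / q)
    {f : X → Y}
    (hf : ∀ x y : X, ∀ s t : ℝ, 0 ≤ s → 0 ≤ t →
      min (N x (t ^ q)) (N y (s ^ q)) ≤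
        N' (f (x + y) + f (x - y) - 2 • f x - 2 • f y) (t + s))
    (k : ℕ) (x : X) {t : ℝ} (ht : 0 < t) :
    N x t ≤
      N' (((4 : ℝ) ^ (k + 1))⁻¹ • f (((2 : ℝ) ^ (k + 1)) • x)
          - ((4 : ℝ) ^ k)⁻¹ • f (((2 : ℝ) ^ k) • x))
        (t ^ p * (2 : ℝ) ^ (((k + 1 : ℕ) : ℝ) * (p - 2) + 1)) := by
  have hp0 : 0 < p := by rw [hp]; positivity
  have hpq : p * q = 1 := by rw [hp]; field_simp
  have hs : 0 ≤ ((2 : ℝ) ^ k * t) ^ p := by positivity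
  have h := hf ((2 : ℝ) ^ k • x) ((2 : ℝ) ^ k • x) _ _ hs hs
  rw [min_self, ← Real.rpow_mul (by positivity), hpq, Real.rpow_one,
    hN.smul_eq _ _ _ (by positivity), abs_of_pos (by positivity),
    mul_div_cancel_left₀ _ (by positivity), sub_self, fuzzy_quadratic_map_zero hN hN' hf] at h
  have hvec : f ((2 : ℝ) ^ k • x + (2 : ℝ) ^ k • x) + 0 - 2 • f ((2 : ℝ) ^ k • x)
        - 2 • f ((2 : ℝ) ^ k • x)
      = (4 : ℝ) ^ (k + 1) • (((4 : ℝ) ^ (k + 1))⁻¹ • f (((2 : ℝ) ^ (k + 1)) • x)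
          - ((4 : ℝ) ^ k)⁻¹ • f (((2 : ℝ) ^ k) • x)) := by
    have h2 : (2 : ℝ) ^ k • x + (2 : ℝ) ^ k • x = (2 : ℝ) ^ (k + 1) • x := by
      rw [pow_succ]; module
    have h4 : (4 : ℝ) ^ (k + 1) * ((4 : ℝ) ^ k)⁻¹ = 4 := by
      rw [pow_succ]; field_simp
    rw [h2, smul_sub, smul_smul, smul_smul, h4, mul_inv_cancel₀ (by positivity)]
    module
  rw [hvec, hN'.smul_eq _ _ _ (by positivity), abs_of_pos (by positivity)] at h
  refine h.trans (hN'.mono _ ?_)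
  have h4 : (4 : ℝ) ^ (k + 1) = (2 : ℝ) ^ (2 * ((k : ℝ) + 1)) := by
    rw [Real.rpow_mul (by norm_num), ← Nat.cast_add_one, Real.rpow_natCast]
    norm_num
  have h2 : ((2 : ℝ) ^ k) ^ p = (2 : ℝ) ^ ((k : ℝ) * p) := by
    rw [Real.rpow_mul (by norm_num), Real.rpow_natCast]
  rw [Real.mul_rpow (by positivity) ht.le, h2, h4, div_le_iff₀ (by positivity), mul_assoc,
    ← Real.rpow_add (by norm_num)]
  calc (2 : ℝ) ^ ((k : ℝ) * p) * t ^ p + (2 : ℝ) ^ ((k : ℝ) * p) * t ^ p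
      = t ^ p * (2 : ℝ) ^ ((k : ℝ) * p + 1) := by
        rw [Real.rpow_add (by norm_num), Real.rpow_one]; ring
    _ ≤ _ := by
        refine mul_le_mul_of_nonneg_left
          (Real.rpow_le_rpow_of_exponent_le (by norm_num) ?_) (by positivity)
        push_cast
        linarith

/-- The telescoping estimate (2.6) in the proof of Theorem 2.1. -/
theorem fuzzy_quadratic_telescoping
    {X Y : Type*} [AddCommGroup X] [Module ℝ X] [AddCommGroup Y] [Module ℝ Y]
    (N : X → ℝ → ℝ) (N' : Y → ℝ → ℝ)
    (hN : IsFuzzyNorm N) (hN' : IsFuzzyNorm N')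
    (q p : ℝ) (hq : 0 < q) (hp : p = 1 / q)
    (f : X → Y)
    (hf : ∀ x y : X, ∀ s t : ℝ, 0 ≤ s → 0 ≤ t →
      min (N x (t ^ q)) (N y (s ^ q)) ≤
        N' (f (x + y) + f (x - y) - 2 • f x - 2 • f y) (t + s)) :
    ∀ n m : ℕ, m < n → ∀ x : X, ∀ t : ℝ, 0 < t →
      N x t ≤
        N' (((4 : ℝ) ^ n)⁻¹ • f (((2 : ℝ) ^ n) • x) - ((4 : ℝ) ^ m)⁻¹ • f (((2 : ℝ) ^ m) • x))
          (∑ k ∈ Finset.Ioc m n, t ^ p * (2 : ℝ) ^ ((k : ℝ) * (p - 2) + 1)) := by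
  intro n m hmn x t ht
  induction n, Nat.succ_le_of_lt hmn using Nat.le_induction with
  | base => simpa using fuzzy_quadratic_step hN hN' hq hp hf m x ht
  | succ n hn ih =>
    have hmn' : m < n := hn
    rw [Finset.sum_Ioc_succ_top hmn'.le, add_comm (∑ k ∈ _, _)]
    have h := hN'.min_le_add _ _ _ _ |>.trans' <|
      le_min (fuzzy_quadratic_step hN hN' hq hp hf n x ht) (ih hmn')
    rwa [sub_add_sub_cancel] at h
end

section
/- Let X be a real linear space, (Y, N) a fuzzy normed space, (Z, N′) a fuzzy normed space, and φ : X × X → Z. Suppose f, g, h : X → Y are even functions with f(0) = g(0) = h(0) = 0 such that N (f(x+y) + f(x−y) − 2g(x) − 2h(y)) t ≥ N′ (φ(x, y)) t for all x, y ∈ X and all t ∈ ℝ. Then for all x, y ∈ X and t > 0, N (f(x+y) + f(x−y) − 2f(x) − 2f(y)) t ≥ min {N′ (φ(x,y)) (t/3), N′ (φ(x,0)) (t/3), N′ (φ(0,y)) (t/3)}. -/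
/-!
Write `D = f (x + y) + f (x - y) - 2 g x - 2 h y`. The quadratic defect of `f` is
`D + (2 g x - 2 f x) + (2 h y - 2 f y)`. The hypothesis bounds `D` directly; at `y = 0` it bounds
`2 f x - 2 g x`, and at `x = 0`, since `f` is even, it bounds `2 f y - 2 h y`. The triangle
inequality for `N` with `t` split into three equal parts gives the estimate.
-/

open Filter Finset

/-- A fuzzy norm is even: the homogeneity axiom with scalar `-1`. -/
theorem neg_invariant {Y : Type*} [AddCommGroup Y] [Module ℝ Y] {N : Y → ℝ → ℝ}
    (hN : IsFuzzyNorm N) (y : Y) (t : ℝ) : N (-y) t = N y t := by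
  simpa using hN.smul_eq (-1) y t (by norm_num)

/-- Estimate (3.19) in the proof of Proposition 3.2: the even part is
approximately quadratic. -/
theorem fuzzy_pexider_even_almost_quadratic
    {X Y Z : Type*} [AddCommGroup X] [Module ℝ X]
    [AddCommGroup Y] [Module ℝ Y] [AddCommGroup Z] [Module ℝ Z]
    (N : Y → ℝ → ℝ) (N' : Z → ℝ → ℝ)
    (hN : IsFuzzyNorm N) (hN' : IsFuzzyNorm N')
    (φ : X × X → Z)
    (f g h : X → Y)
    (hfeven : ∀ x : X, f (-x) = f x)
    (hgeven : ∀ x : X, g (-x) = g x)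
    (hheven : ∀ x : X, h (-x) = h x)
    (hf0 : f 0 = 0) (hg0 : g 0 = 0) (hh0 : h 0 = 0)
    (hineq : ∀ x y : X, ∀ t : ℝ,
      N' (φ (x, y)) t ≤ N (f (x + y) + f (x - y) - 2 • g x - 2 • h y) t) :
    ∀ x y : X, ∀ t : ℝ, 0 < t →
      min (min (N' (φ (x, y)) (t / 3)) (N' (φ (x, 0)) (t / 3))) (N' (φ (0, y)) (t / 3)) ≤
        N (f (x + y) + f (x - y) - 2 • f x - 2 • f y) t := by
  intro x y t _
  have h1 := hineq x y (t / 3)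
  have h2 : N' (φ (x, 0)) (t / 3) ≤ N (2 • g x - 2 • f x) (t / 3) := by
    have e := hineq x 0 (t / 3)
    rw [add_zero, sub_zero, hh0] at e
    rw [← neg_invariant hN, show -(2 • g x - 2 • f x) = f x + f x - 2 • g x - 2 • (0 : Y) by abel]
    exact e
  have h3 : N' (φ (0, y)) (t / 3) ≤ N (2 • h y - 2 • f y) (t / 3) := by
    have e := hineq 0 y (t / 3)
    rw [zero_add, zero_sub, hfeven, hg0] at e
    rw [← neg_invariant hN, show -(2 • h y - 2 • f y) = f y + f y - 2 • (0 : Y) - 2 • h y by abel]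
    exact e
  calc _ ≤ min (min (N (f (x + y) + f (x - y) - 2 • g x - 2 • h y) (t / 3))
            (N (2 • g x - 2 • f x) (t / 3))) (N (2 • h y - 2 • f y) (t / 3)) :=
        min_le_min (min_le_min h1 h2) h3
    _ ≤ _ := min_le_min_right _ (hN.min_le_add _ _ _ _)
    _ ≤ _ := hN.min_le_add _ _ _ _
    _ = _ := by
        congr 1
        · abel
        · ring
end
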